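/- arXiv:2004.07073 — 7 statements merged into one kernel-verified Lean document; each statement's English description precedes it below -/
import Mathlib

section
/- Let X be a locally compact subset of the Euclidean space ℝ^N and let E be a vector sublattice of the space of all real-valued functions on X (with pointwise ordering) that contains the 2N+2 test functions 1, pr_1, ..., pr_N, -pr_1, ..., -pr_N and ∑_{k=1}^N pr_k², where pr_k denotes the k-th canonical coordinate projection restricted to X. Let (T_n)_n be a sequence of monotone and sublinear operators from E into E such that T_n(h) → h uniformly on every compact subset of X for each of these 2N+2 test functions h. Then T_n(f) → f uniformly on every compact subset of X for every nonnegative function f in E that is continuous and bounded on X. -/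
/-!
The argument is the classical Korovkin parabola estimate, arranged so that only nonnegative
multiples of the test functions are used. For `f` continuous and bounded and `K` compact, every
`ε > 0` admits a constant `C` with `|f y - f x| ≤ ε + C ‖y - x‖ ^ 2` for all `x ∈ K` and all `y ∈ X`
(`exists_quadratic_modulus`). For fixed `x`, the function `y ↦ ‖y - x‖ ^ 2` is a combination with
nonnegative coefficients of the `2N + 2` test functions (the sign of each coordinate of `x` decides
whether `pr_k` or `-pr_k` occurs), so sublinearity bounds `T ‖· - x‖ ^ 2` at `x` by a quantity that
tends to zero uniformly for `x ∈ K` (`apply_sq_dist_le`). Applying `T` to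
`f ≤ (f x + ε) • 1 + C • ‖· - x‖ ^ 2` gives the upper estimate for `T f x`. Applying it to
`f x • 1 ≤ f + ε • 1 + C • ‖· - x‖ ^ 2` gives the lower one; here `f x ≥ 0` is needed in order to
have `T (f x • 1) = f x • T 1`.
-/

open Filter

/-- A bounded continuous function has, uniformly for base points in a compact set, a quadratic
modulus of continuity up to an error `ε`. -/
lemma exists_quadratic_modulus {α : Type*} [PseudoMetricSpace α] {f : α → ℝ} (hf : Continuous f)
    {M : ℝ} (hM : ∀ x, |f x| ≤ M) {K : Set α} (hK : IsCompact K) {ε : ℝ} (hε : 0 < ε) :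
    ∃ C : ℝ, 0 ≤ C ∧ ∀ x ∈ K, ∀ y, |f y - f x| ≤ ε + C * dist y x ^ 2 := by
  have h := hK.uniformContinuousAt_of_continuousAt f (fun x _ => hf.continuousAt)
    (Metric.dist_mem_uniformity hε)
  obtain ⟨δ, hδ, h⟩ := Metric.mem_uniformity_dist.1 h
  -- Beyond distance `δ` the trivial bound `2 |M|` is absorbed by the quadratic term.
  refine ⟨2 * |M| / δ ^ 2, by positivity, fun x hx y => ?_⟩
  by_cases hxy : dist x y < δ
  · have h1 : dist (f x) (f y) < ε := h hxy hx
    rw [dist_comm, Real.dist_eq] at h1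
    have : 0 ≤ 2 * |M| / δ ^ 2 * dist y x ^ 2 := by positivity
    linarith
  · rw [not_lt, dist_comm] at hxy
    have h1 : |f y - f x| ≤ 2 * |M| := by
      have := abs_sub (f y) (f x)
      have := hM x
      have := hM y
      have := le_abs_self M
      linarith
    have h2 : 2 * |M| ≤ 2 * |M| / δ ^ 2 * dist y x ^ 2 := by
      rw [div_mul_eq_mul_div, le_div_iff₀ (by positivity)]
      gcongr
    linarith

section Sublinear

variable {ι X : Type*} {E : Set (X → ℝ)} {T : (X → ℝ) → (X → ℝ)}

lemma sum_mem_and_apply_sum_le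
    (hEadd : ∀ f ∈ E, ∀ g ∈ E, f + g ∈ E) (hE0 : (0 : X → ℝ) ∈ E) (hT0 : T 0 = 0)
    (hsubadd : ∀ f ∈ E, ∀ g ∈ E, T (f + g) ≤ T f + T g)
    (h : ι → X → ℝ) (hh : ∀ k, h k ∈ E) (s : Finset ι) :
    (∑ k ∈ s, h k) ∈ E ∧ T (∑ k ∈ s, h k) ≤ ∑ k ∈ s, T (h k) := by
  classical
  induction s using Finset.induction_on with
  | empty => simp [hE0, hT0]
  | insert a s ha ih =>
    rw [Finset.sum_insert ha, Finset.sum_insert ha]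
    exact ⟨hEadd _ (hh a) _ ih.1, (hsubadd _ (hh a) _ ih.1).trans (by gcongr; exact ih.2)⟩

/-- If, at the point `x`, the operator `T` reproduces each of the test functions `1`, `± p k` and
`∑ k, p k ^ 2` up to `η`, then it sends `∑ k, (p k - p k x) ^ 2` to something at most a constant
times `η` at `x`. -/
lemma apply_sq_dist_le [Fintype ι]
    (hEadd : ∀ f ∈ E, ∀ g ∈ E, f + g ∈ E) (hEsmul : ∀ c : ℝ, ∀ f ∈ E, c • f ∈ E)
    (hsubadd : ∀ f ∈ E, ∀ g ∈ E, T (f + g) ≤ T f + T g)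
    (hposhom : ∀ a : ℝ, 0 ≤ a → ∀ f ∈ E, T (a • f) = a • T f)
    (p : ι → X → ℝ) (h1E : (1 : X → ℝ) ∈ E) (hpE : ∀ k, p k ∈ E)
    (hnE : ∀ k, (fun y => -p k y) ∈ E) (hsE : (fun y => ∑ k, p k y ^ 2) ∈ E)
    {x : X} {η R : ℝ} (hR : ∀ k, |p k x| ≤ R)
    (h1 : |T 1 x - 1| ≤ η) (hp : ∀ k, |T (p k) x - p k x| ≤ η)
    (hn : ∀ k, |T (fun y => -p k y) x - -p k x| ≤ η)
    (hs : |T (fun y => ∑ k, p k y ^ 2) x - ∑ k, p k x ^ 2| ≤ η) :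
    (fun y => ∑ k, (p k y - p k x) ^ 2) ∈ E ∧
      T (fun y => ∑ k, (p k y - p k x) ^ 2) x ≤
        (1 + Fintype.card ι * (2 * R + R ^ 2)) * η := by
  have hE0 : (0 : X → ℝ) ∈ E := by simpa using hEsmul 0 _ h1E
  have hT0 : T 0 = 0 := by simpa using hposhom 0 le_rfl _ h1E
  have hη : 0 ≤ η := (abs_nonneg _).trans h1
  -- The test function `± p k` whose sign makes `|p k x| * q k = -(p k x) * p k`.
  let q : ι → X → ℝ := fun k => if 0 ≤ p k x then (fun y => -p k y) else p k
  have hqE : ∀ k, q k ∈ E := fun k => by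
    dsimp only [q]; split_ifs
    exacts [hnE k, hpE k]
  have hqT : ∀ k, T (q k) x ≤ -|p k x| + η := fun k => by
    dsimp only [q]; split_ifs with hk
    · rw [abs_of_nonneg hk]; linarith [(abs_le.1 (hn k)).2]
    · rw [abs_of_neg (not_le.1 hk)]; linarith [(abs_le.1 (hp k)).2]
  have hq : ∀ k y, |p k x| * q k y = -(p k x * p k y) := fun k y => by
    dsimp only [q]; split_ifs with hk
    · rw [abs_of_nonneg hk]; ring
    · rw [abs_of_neg (not_le.1 hk)]; ring
  let S : X → ℝ := fun y => ∑ k, p k y ^ 2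
  have hSx : 0 ≤ S x := Finset.sum_nonneg fun k _ => sq_nonneg _
  obtain ⟨hLE, hLT⟩ := sum_mem_and_apply_sum_le hEadd hE0 hT0 hsubadd
    (fun k => (2 * |p k x|) • q k) (fun k => hEsmul _ _ (hqE k)) Finset.univ
  set L : X → ℝ := ∑ k, (2 * |p k x|) • q k with hL
  have hdec : (fun y => ∑ k, (p k y - p k x) ^ 2) = S + (L + S x • (1 : X → ℝ)) := by
    funext y
    simp only [S, hL, Pi.add_apply, Finset.sum_apply, Pi.smul_apply, smul_eq_mul, Pi.one_apply,
      mul_one, ← Finset.sum_add_distrib]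
    refine Finset.sum_congr rfl fun k _ => ?_
    linear_combination (-2) * hq k y
  have hcE := hEsmul (S x) _ h1E
  have hrE := hEadd _ hLE _ hcE
  rw [hdec]
  refine ⟨hEadd _ hsE _ hrE, ?_⟩
  have e1 : T (S + (L + S x • (1 : X → ℝ))) x ≤ T S x + T (L + S x • (1 : X → ℝ)) x :=
    hsubadd _ hsE _ hrE x
  have e2 : T (L + S x • (1 : X → ℝ)) x ≤ T L x + S x * T 1 x := by
    have := hsubadd _ hLE _ hcE x
    rwa [hposhom _ hSx _ h1E] at this
  have e3 : T L x ≤ ∑ k, (2 * R * η - 2 * p k x ^ 2) := by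
    refine (hLT x).trans ?_
    rw [Finset.sum_apply]
    refine Finset.sum_le_sum fun k _ => ?_
    rw [hposhom _ (by positivity) _ (hqE k), Pi.smul_apply, smul_eq_mul]
    have a1 := mul_le_mul_of_nonneg_left (hqT k) (by positivity : 0 ≤ 2 * |p k x|)
    have a2 := mul_le_mul_of_nonneg_right (hR k) hη
    have a3 := abs_mul_abs_self (p k x)
    nlinarith
  have e4 : ∑ k, (2 * R * η - 2 * p k x ^ 2) = Fintype.card ι * (2 * R * η) - 2 * S x := by
    simp [S, Finset.sum_sub_distrib, Finset.mul_sum]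
  have e5 : S x ≤ Fintype.card ι * R ^ 2 := by
    have : S x ≤ ∑ _k : ι, R ^ 2 :=
      Finset.sum_le_sum fun k _ => sq_le_sq' (by linarith [abs_le.1 (hR k)]) (abs_le.1 (hR k)).2
    simpa using this
  have e6 : T S x ≤ S x + η := by linarith [(abs_le.1 hs).2]
  have e7 : S x * T 1 x ≤ S x + S x * η := by
    have := mul_le_mul_of_nonneg_left (abs_le.1 h1).2 hSx
    linarith
  have e8 := mul_le_mul_of_nonneg_right e5 hη
  linarith

end Sublinear

/-- Nonlinear Korovkin theorem (several variables), part (i):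
for monotone sublinear operators, convergence on the 2N+2 test functions
implies convergence on all nonnegative bounded continuous functions in E,
uniformly on compact subsets of X. -/
theorem choquet_korovkin_nonneg {N : ℕ} (X : Set (EuclideanSpace ℝ (Fin N)))
    [LocallyCompactSpace X]
    (E : Set (X → ℝ))
    -- E is a vector sublattice of F(X):
    (hEadd : ∀ f ∈ E, ∀ g ∈ E, f + g ∈ E)
    (hEsmul : ∀ c : ℝ, ∀ f ∈ E, c • f ∈ E)
    (hEabs : ∀ f ∈ E, |f| ∈ E)
    -- E contains the 2N+2 test functions:
    (h1E : (1 : X → ℝ) ∈ E)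
    (hprE : ∀ k : Fin N, (fun x : X => (x : EuclideanSpace ℝ (Fin N)) k) ∈ E)
    (hnprE : ∀ k : Fin N, (fun x : X => -((x : EuclideanSpace ℝ (Fin N)) k)) ∈ E)
    (hsqE : (fun x : X => ∑ k : Fin N, ((x : EuclideanSpace ℝ (Fin N)) k) ^ 2) ∈ E)
    -- the operators T n map E to E, are monotone and sublinear:
    (T : ℕ → (X → ℝ) → (X → ℝ))
    (hmaps : ∀ n, ∀ f ∈ E, T n f ∈ E)
    (hmono : ∀ n, ∀ f ∈ E, ∀ g ∈ E, f ≤ g → T n f ≤ T n g)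
    (hsubadd : ∀ n, ∀ f ∈ E, ∀ g ∈ E, T n (f + g) ≤ T n f + T n g)
    (hposhom : ∀ n, ∀ a : ℝ, 0 ≤ a → ∀ f ∈ E, T n (a • f) = a • T n f)
    -- convergence on each of the 2N+2 test functions, uniformly on compacts:
    (hconv1 : ∀ K : Set X, IsCompact K →
      TendstoUniformlyOn (fun n => T n (1 : X → ℝ)) (1 : X → ℝ) atTop K)
    (hconvpr : ∀ k : Fin N, ∀ K : Set X, IsCompact K →
      TendstoUniformlyOn (fun n => T n (fun x : X => (x : EuclideanSpace ℝ (Fin N)) k))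
        (fun x : X => (x : EuclideanSpace ℝ (Fin N)) k) atTop K)
    (hconvnpr : ∀ k : Fin N, ∀ K : Set X, IsCompact K →
      TendstoUniformlyOn (fun n => T n (fun x : X => -((x : EuclideanSpace ℝ (Fin N)) k)))
        (fun x : X => -((x : EuclideanSpace ℝ (Fin N)) k)) atTop K)
    (hconvsq : ∀ K : Set X, IsCompact K →
      TendstoUniformlyOn
        (fun n => T n (fun x : X => ∑ k : Fin N, ((x : EuclideanSpace ℝ (Fin N)) k) ^ 2))
        (fun x : X => ∑ k : Fin N, ((x : EuclideanSpace ℝ (Fin N)) k) ^ 2) atTop K) :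
    ∀ f ∈ E, Continuous f → (∃ C : ℝ, ∀ x : X, |f x| ≤ C) → 0 ≤ f →
      ∀ K : Set X, IsCompact K → TendstoUniformlyOn (fun n => T n f) f atTop K := by
  intro f hf hfc ⟨M, hM⟩ hf0 K hK
  rw [Metric.tendstoUniformlyOn_iff]
  intro e he
  obtain ⟨C, hC, hmod⟩ := exists_quadratic_modulus hfc hM hK (by positivity : 0 < e / 4)
  let p : Fin N → X → ℝ := fun k x => (x : EuclideanSpace ℝ (Fin N)) k
  have hdist : ∀ x y : X, dist y x ^ 2 = ∑ k, (p k y - p k x) ^ 2 := fun x y => by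
    rw [Subtype.dist_eq, dist_eq_norm, EuclideanSpace.norm_sq_eq]
    simp [p]
  obtain ⟨R, hR⟩ : ∃ R : ℝ, ∀ x ∈ K, ‖(x : EuclideanSpace ℝ (Fin N))‖ ≤ R :=
    hK.exists_bound_of_continuousOn continuous_subtype_val.continuousOn
  set D : ℝ := 1 + Fintype.card (Fin N) * (2 * |R| + |R| ^ 2) with hD
  have hD0 : 0 ≤ D := by positivity
  -- The final error is at most `|M| η + (e / 4) (1 + η) + C D η`, which this `η` keeps below `e`.
  have hden : 0 < 4 * (|M| + C * D + 1) := by positivity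
  obtain ⟨η, hη, hη1, hηe⟩ : ∃ η : ℝ, 0 < η ∧ η ≤ 1 ∧ (|M| + C * D) * η ≤ e / 4 := by
    refine ⟨min 1 (e / (4 * (|M| + C * D + 1))), by positivity, min_le_left _ _, ?_⟩
    set η := min 1 (e / (4 * (|M| + C * D + 1))) with hηdef
    have h0 : 0 < η := by positivity
    have h2 : η ≤ e / (4 * (|M| + C * D + 1)) := min_le_right _ _
    rw [le_div_iff₀ hden] at h2
    linarith
  filter_upwards [Metric.tendstoUniformlyOn_iff.1 (hconv1 K hK) η hη,
    eventually_all.2 fun k => Metric.tendstoUniformlyOn_iff.1 (hconvpr k K hK) η hη,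
    eventually_all.2 fun k => Metric.tendstoUniformlyOn_iff.1 (hconvnpr k K hK) η hη,
    Metric.tendstoUniformlyOn_iff.1 (hconvsq K hK) η hη] with n t1 tp tn ts x hx
  have h1 : |T n 1 x - 1| ≤ η := by
    have := (t1 x hx).le
    rwa [dist_comm, Real.dist_eq] at this
  obtain ⟨hφE, hφT⟩ := apply_sq_dist_le (T := T n) hEadd hEsmul (hsubadd n) (hposhom n) p h1E
    hprE hnprE hsqE (x := x) (η := η) (R := |R|)
    (fun k => (PiLp.norm_apply_le (x : EuclideanSpace ℝ (Fin N)) k).trans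
      ((hR x hx).trans (le_abs_self R))) h1
    (fun k => by have := (tp k x hx).le; rwa [dist_comm, Real.dist_eq] at this)
    (fun k => by have := (tn k x hx).le; rwa [dist_comm, Real.dist_eq] at this)
    (by have := (ts x hx).le; rwa [dist_comm, Real.dist_eq] at this)
  rw [← hD] at hφT
  set φ : X → ℝ := fun y => ∑ k, (p k y - p k x) ^ 2 with hφ
  have hmodφ : ∀ y, |f y - f x| ≤ e / 4 + C * φ y := fun y => by
    have := hmod x hx y
    rwa [hdist] at this
  have hfx : 0 ≤ f x := hf0 x
  have hfM : f x ≤ |M| := (le_abs_self _).trans ((hM x).trans (le_abs_self M))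
  have hCφE := hEsmul C _ hφE
  have hup : T n f x ≤ (f x + e / 4) * T n 1 x + C * T n φ x := by
    have hc : 0 ≤ f x + e / 4 := by positivity
    have hcE := hEsmul (f x + e / 4) _ h1E
    have a := hmono n f hf _ (hEadd _ hcE _ hCφE) (fun y => by
      have := (abs_le.1 (hmodφ y)).2
      simp only [Pi.add_apply, Pi.smul_apply, Pi.one_apply, smul_eq_mul]
      linarith) x
    have b := hsubadd n _ hcE _ hCφE x
    rw [hposhom n _ hc _ h1E, hposhom n _ hC _ hφE] at b
    exact a.trans b
  have hlow : f x * T n 1 x ≤ T n f x + (e / 4 * T n 1 x + C * T n φ x) := by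
    have hc : 0 ≤ e / 4 := by positivity
    have hcE := hEsmul (e / 4) _ h1E
    have hsE := hEadd _ hcE _ hCφE
    have a := hmono n _ (hEsmul (f x) _ h1E) _ (hEadd _ hf _ hsE) (fun y => by
      have := (abs_le.1 (hmodφ y)).1
      simp only [Pi.add_apply, Pi.smul_apply, Pi.one_apply, smul_eq_mul]
      linarith) x
    have b := hsubadd n _ hf _ hsE x
    have c := hsubadd n _ hcE _ hCφE x
    rw [hposhom n _ hc _ h1E, hposhom n _ hC _ hφE] at c
    rw [hposhom n _ hfx _ h1E] at a
    simp only [Pi.add_apply, Pi.smul_apply, smul_eq_mul] at a b c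
    linarith
  obtain ⟨h1l, h1u⟩ := abs_le.1 h1
  have b1 := mul_le_mul_of_nonneg_left hφT hC
  have b2 := mul_le_mul_of_nonneg_left h1u hfx
  have b3 := mul_le_mul_of_nonneg_left h1l hfx
  have b4 := mul_le_mul_of_nonneg_right hfM hη.le
  have b5 : e / 4 * T n 1 x ≤ e / 4 * 2 := by gcongr; linarith
  rw [Real.dist_eq, abs_lt]
  constructor <;> linarith
end

section
/- Let X be a locally compact subset of the Euclidean space ℝ^N and let E be a vector sublattice of the space of all real-valued functions on X (with pointwise ordering) that contains the 2N+2 test functions 1, pr_1, ..., pr_N, -pr_1, ..., -pr_N and ∑_{k=1}^N pr_k², where pr_k denotes the k-th canonical coordinate projection restricted to X. Let (T_n)_n be a sequence of monotone, sublinear and comonotone additive operators from E into E such that T_n(h) → h uniformly on every compact subset of X for each of these 2N+2 test functions h. Then T_n(f) → f uniformly on every compact subset of X for every function f in E that is continuous and bounded on X. -/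
open Filter

/-!
Write `sq = ∑ pr_k²`. For a compact `K` and a continuous `f` with `|f| ≤ C`, continuity of `f` at
the points of `K` is uniform in the sense that there is a `δ > 0` with `|f t - f s| < ε` whenever
`s ∈ K`, `t ∈ X` and `dist s t < δ`. With `A = 2C / δ²` this gives, for all `s ∈ K` and `t ∈ X`,
`f t ≤ f s + ε + A ‖t - s‖² = (f s + ε + A ‖s‖²) + A sq t + ∑ (-2 A s_k) pr_k t`
(`le_quadratic_majorant`). The right-hand side is a combination of test functions. Monotonicity and
sublinearity bound `T n f s` by the same combination of images of test functions
(`apply_smul_le` handles coefficients of either sign), and at `t = s` the combination is `f s + ε`.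
As the coefficients are bounded on `K`, this gives `T n f ≤ f + 2ε` on `K` eventually.

The coefficient of the constant `1` may be negative; comonotone additivity enters only here, through
`T n (-1) = -T n 1`. The lower estimate is the upper one for `-f`, because
`0 = T n (f - f) ≤ T n f + T n (-f)`.
-/

/-- The quadratic majorant of a bounded function which is `ε`-close to `f s` on the `δ`-ball
around `s`; outside the ball the quadratic term alone exceeds the oscillation `2C`. -/
lemma le_quadratic_majorant {N : ℕ} {X : Set (EuclideanSpace ℝ (Fin N))} {f : X → ℝ}
    {C ε δ : ℝ} (hC : ∀ x, |f x| ≤ C) (hε : 0 < ε) (hδ : 0 < δ) (s : X)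
    (hs : ∀ t : X, dist s t < δ → |f t - f s| < ε) :
    f ≤ (f s + ε + 2 * C / δ ^ 2 * ‖(s : EuclideanSpace ℝ (Fin N))‖ ^ 2) • (1 : X → ℝ) +
      ((2 * C / δ ^ 2) •
          (fun x : X => ∑ k : Fin N, ((x : EuclideanSpace ℝ (Fin N)) k) ^ 2) +
        ∑ k : Fin N, (-2 * (2 * C / δ ^ 2) * (s : EuclideanSpace ℝ (Fin N)) k) •
          (fun x : X => (x : EuclideanSpace ℝ (Fin N)) k)) := by
  intro t
  have hC0 : 0 ≤ C := (abs_nonneg _).trans (hC s)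
  set A : ℝ := 2 * C / δ ^ 2 with hA
  have hA0 : 0 ≤ A := by positivity
  have hdist : dist s t ^ 2 = ‖(s : EuclideanSpace ℝ (Fin N))‖ ^ 2 +
      ∑ k : Fin N, ((t : EuclideanSpace ℝ (Fin N)) k) ^ 2 -
      2 * ∑ k : Fin N, (s : EuclideanSpace ℝ (Fin N)) k * (t : EuclideanSpace ℝ (Fin N)) k := by
    rw [Subtype.dist_eq, dist_eq_norm, EuclideanSpace.real_norm_sq_eq,
      EuclideanSpace.real_norm_sq_eq, Finset.mul_sum, ← Finset.sum_add_distrib,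
      ← Finset.sum_sub_distrib]
    refine Finset.sum_congr rfl fun k _ => ?_
    simp only [PiLp.sub_apply]
    ring
  have key : f t ≤ f s + ε + A * dist s t ^ 2 := by
    rcases lt_or_ge (dist s t) δ with h | h
    · have h1 := (abs_lt.1 (hs t h)).2
      have h2 : 0 ≤ A * dist s t ^ 2 := by positivity
      linarith
    · have h1 := (abs_le.1 (hC t)).2
      have h2 := (abs_le.1 (hC s)).1
      have h3 : A * δ ^ 2 = 2 * C := by rw [hA]; field_simp
      have h4 : A * δ ^ 2 ≤ A * dist s t ^ 2 := by gcongr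
      linarith
  have hsum : ∑ k : Fin N, (-2 * A * (s : EuclideanSpace ℝ (Fin N)) k) *
      (t : EuclideanSpace ℝ (Fin N)) k =
      -2 * A * ∑ k : Fin N, (s : EuclideanSpace ℝ (Fin N)) k *
        (t : EuclideanSpace ℝ (Fin N)) k := by
    rw [Finset.mul_sum]
    exact Finset.sum_congr rfl fun k _ => by ring
  simp only [Pi.add_apply, Pi.smul_apply, smul_eq_mul, Finset.sum_apply, Pi.one_apply]
  rw [hsum]
  rw [hdist] at key
  linarith

/-- A positively homogeneous operator that nearly fixes both `h` and `-h` at `s` nearly fixes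
every real multiple of `h` there, from above. -/
lemma apply_smul_le {X : Type*} {E : Set (X → ℝ)} {T : (X → ℝ) → (X → ℝ)}
    (hposhom : ∀ a : ℝ, 0 ≤ a → ∀ f ∈ E, T (a • f) = a • T f)
    {h : X → ℝ} (hE : h ∈ E) (hE' : -h ∈ E) {s : X} {η : ℝ}
    (h1 : |T h s - h s| ≤ η) (h2 : |T (-h) s - (-h) s| ≤ η) (c : ℝ) :
    T (c • h) s ≤ c * h s + |c| * η := by
  rcases le_total 0 c with hc | hc
  · rw [hposhom c hc h hE, abs_of_nonneg hc, Pi.smul_apply, smul_eq_mul]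
    nlinarith [(abs_le.1 h1).2]
  · have : c • h = (-c) • (-h) := by simp
    rw [this, hposhom (-c) (by linarith) _ hE', abs_of_nonpos hc, Pi.smul_apply, smul_eq_mul]
    have := (abs_le.1 h2).2
    rw [Pi.neg_apply] at this
    nlinarith

/-- Finite subadditivity; `T 0 = 0` covers the empty sum. -/
lemma apply_sum_le {X ι : Type*} {E : Set (X → ℝ)} {T : (X → ℝ) → (X → ℝ)}
    (hEadd : ∀ f ∈ E, ∀ g ∈ E, f + g ∈ E) (h0E : (0 : X → ℝ) ∈ E) (h0 : T 0 = 0)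
    (hsubadd : ∀ f ∈ E, ∀ g ∈ E, T (f + g) ≤ T f + T g)
    (g : ι → X → ℝ) (hg : ∀ k, g k ∈ E) (S : Finset ι) :
    ∑ k ∈ S, g k ∈ E ∧ T (∑ k ∈ S, g k) ≤ ∑ k ∈ S, T (g k) := by
  classical
  induction S using Finset.induction_on with
  | empty => simp [h0E, h0]
  | insert a S ha ih =>
    rw [Finset.sum_insert ha, Finset.sum_insert ha]
    exact ⟨hEadd _ (hg a) _ ih.1, (hsubadd _ (hg a) _ ih.1).trans (by gcongr; exact ih.2)⟩

/-- Nonlinear Korovkin theorem (several variables), part (ii):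
for monotone, sublinear and comonotone additive operators, convergence on the
2N+2 test functions implies convergence on all bounded continuous functions in E,
uniformly on compact subsets of X. -/
theorem choquet_korovkin_comonotone {N : ℕ} (X : Set (EuclideanSpace ℝ (Fin N)))
    [LocallyCompactSpace X]
    (E : Set (X → ℝ))
    -- E is a vector sublattice of F(X):
    (hEadd : ∀ f ∈ E, ∀ g ∈ E, f + g ∈ E)
    (hEsmul : ∀ c : ℝ, ∀ f ∈ E, c • f ∈ E)
    (hEabs : ∀ f ∈ E, |f| ∈ E)
    -- E contains the 2N+2 test functions:
    (h1E : (1 : X → ℝ) ∈ E)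
    (hprE : ∀ k : Fin N, (fun x : X => (x : EuclideanSpace ℝ (Fin N)) k) ∈ E)
    (hnprE : ∀ k : Fin N, (fun x : X => -((x : EuclideanSpace ℝ (Fin N)) k)) ∈ E)
    (hsqE : (fun x : X => ∑ k : Fin N, ((x : EuclideanSpace ℝ (Fin N)) k) ^ 2) ∈ E)
    -- the operators T n map E to E, are monotone and sublinear:
    (T : ℕ → (X → ℝ) → (X → ℝ))
    (hmaps : ∀ n, ∀ f ∈ E, T n f ∈ E)
    (hmono : ∀ n, ∀ f ∈ E, ∀ g ∈ E, f ≤ g → T n f ≤ T n g)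
    (hsubadd : ∀ n, ∀ f ∈ E, ∀ g ∈ E, T n (f + g) ≤ T n f + T n g)
    (hposhom : ∀ n, ∀ a : ℝ, 0 ≤ a → ∀ f ∈ E, T n (a • f) = a • T n f)
    -- convergence on each of the 2N+2 test functions, uniformly on compacts:
    (hcomon : ∀ n, ∀ f ∈ E, ∀ g ∈ E,
      (∀ s t : X, (f s - f t) * (g s - g t) ≥ 0) → T n (f + g) = T n f + T n g)
    (hconv1 : ∀ K : Set X, IsCompact K →
      TendstoUniformlyOn (fun n => T n (1 : X → ℝ)) (1 : X → ℝ) atTop K)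
    (hconvpr : ∀ k : Fin N, ∀ K : Set X, IsCompact K →
      TendstoUniformlyOn (fun n => T n (fun x : X => (x : EuclideanSpace ℝ (Fin N)) k))
        (fun x : X => (x : EuclideanSpace ℝ (Fin N)) k) atTop K)
    (hconvnpr : ∀ k : Fin N, ∀ K : Set X, IsCompact K →
      TendstoUniformlyOn (fun n => T n (fun x : X => -((x : EuclideanSpace ℝ (Fin N)) k)))
        (fun x : X => -((x : EuclideanSpace ℝ (Fin N)) k)) atTop K)
    (hconvsq : ∀ K : Set X, IsCompact K →
      TendstoUniformlyOn
        (fun n => T n (fun x : X => ∑ k : Fin N, ((x : EuclideanSpace ℝ (Fin N)) k) ^ 2))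
        (fun x : X => ∑ k : Fin N, ((x : EuclideanSpace ℝ (Fin N)) k) ^ 2) atTop K) :
    ∀ f ∈ E, Continuous f → (∃ C : ℝ, ∀ x : X, |f x| ≤ C) →
      ∀ K : Set X, IsCompact K → TendstoUniformlyOn (fun n => T n f) f atTop K := by
  have h0E : (0 : X → ℝ) ∈ E := by simpa using hEsmul 0 1 h1E
  have hT0 : ∀ n, T n 0 = 0 := fun n => by simpa using hposhom n 0 le_rfl 1 h1E
  have hnegE : ∀ f ∈ E, -f ∈ E := fun f hf => by simpa using hEsmul (-1) f hf
  have hT1 : ∀ n, T n (-1) = -T n 1 := fun n => by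
    have h := hcomon n 1 h1E (-1) (hnegE 1 h1E) (by simp)
    rw [add_neg_cancel, hT0] at h
    exact (neg_eq_of_add_eq_zero_right h.symm).symm
  have upper : ∀ f ∈ E, Continuous f → (∃ C : ℝ, ∀ x : X, |f x| ≤ C) →
      ∀ K : Set X, IsCompact K → ∀ ε > 0, ∀ᶠ n in atTop, ∀ s ∈ K, T n f s < f s + ε := by
    intro f hf hfc ⟨C, hC⟩ K hK ε' hε'
    rcases K.eq_empty_or_nonempty with rfl | ⟨s₀, hs₀⟩
    · simp
    have hC0 : 0 ≤ C := (abs_nonneg _).trans (hC s₀)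
    obtain ⟨ε, hε, hεε'⟩ : ∃ ε : ℝ, 0 < ε ∧ ε' = 2 * ε := ⟨ε' / 2, by linarith, by ring⟩
    obtain ⟨δ, hδ, hfδ⟩ : ∃ δ > 0, ∀ s ∈ K, ∀ t : X, dist s t < δ → |f t - f s| < ε := by
      have h := hK.uniformContinuousAt_of_continuousAt f (fun x _ => hfc.continuousAt)
        (Metric.dist_mem_uniformity hε)
      obtain ⟨δ, hδ, h⟩ := Metric.mem_uniformity_dist.1 h
      refine ⟨δ, hδ, fun s hs t hst => ?_⟩
      have := h hst hs
      rwa [Set.mem_ofPred_eq, dist_comm, Real.dist_eq] at this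
    obtain ⟨R, hR0, hR⟩ : ∃ R : ℝ, 0 ≤ R ∧
        ∀ s ∈ K, ‖(s : EuclideanSpace ℝ (Fin N))‖ ≤ R := by
      obtain ⟨R, hR⟩ := hK.exists_bound_of_continuousOn
        (f := fun s : X => (s : EuclideanSpace ℝ (Fin N))) continuous_subtype_val.continuousOn
      exact ⟨R, (norm_nonneg _).trans (hR s₀ hs₀), hR⟩
    have hmaj : ∀ s ∈ K, _ := fun s hs => le_quadratic_majorant hC hε hδ s (hfδ s hs)
    set A : ℝ := 2 * C / δ ^ 2 with hA
    have hA0 : 0 ≤ A := by positivity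
    -- `B` bounds the sum of the absolute values of the coefficients of the majorant over `K`.
    obtain ⟨B, hB⟩ : ∃ B : ℝ, B = (C + ε + A * R ^ 2) + A + N * (2 * A * R) := ⟨_, rfl⟩
    have hB0 : 0 ≤ B := by rw [hB]; positivity
    obtain ⟨η, hη, hηB⟩ : ∃ η : ℝ, 0 < η ∧ B * η < ε := by
      refine ⟨ε / (B + 1), by positivity, ?_⟩
      rw [mul_div_assoc', div_lt_iff₀ (by positivity)]
      nlinarith
    have dev : ∀ {F : ℕ → X → ℝ} {h : X → ℝ}, TendstoUniformlyOn F h atTop K →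
        ∀ᶠ n in atTop, ∀ s ∈ K, |F n s - h s| ≤ η := by
      intro F h hF
      filter_upwards [Metric.tendstoUniformlyOn_iff.1 hF η hη] with n hn s hs
      have := hn s hs
      rw [dist_comm, Real.dist_eq] at this
      exact this.le
    filter_upwards [dev (hconv1 K hK), dev (hconvsq K hK),
      eventually_all.2 fun k => dev (hconvpr k K hK),
      eventually_all.2 fun k => dev (hconvnpr k K hK)] with n e1 esq epr enpr s hs
    have hc1 := hEsmul (f s + ε + A * ‖(s : EuclideanSpace ℝ (Fin N))‖ ^ 2) 1 h1E
    have hc2 := hEsmul A _ hsqE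
    obtain ⟨hc3, hle3⟩ := apply_sum_le hEadd h0E (hT0 n) (hsubadd n)
      (fun k : Fin N => (-2 * A * (s : EuclideanSpace ℝ (Fin N)) k) •
          (fun x : X => (x : EuclideanSpace ℝ (Fin N)) k))
      (fun k => hEsmul _ _ (hprE k)) Finset.univ
    have hc23 := hEadd _ hc2 _ hc3
    have m1 := hmono n f hf _ (hEadd _ hc1 _ hc23) (hmaj s hs) s
    have m2 := hsubadd n _ hc1 _ hc23 s
    have m3 := hsubadd n _ hc2 _ hc3 s
    have m4 := hle3 s
    simp only [Pi.add_apply, Finset.sum_apply] at m2 m3 m4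
    have b1 := apply_smul_le (hposhom n) h1E (hnegE 1 h1E) (e1 s hs)
      (by
        have h := e1 s hs
        rw [hT1, Pi.neg_apply, Pi.neg_apply, ← abs_neg]
        convert h using 2
        ring)
      (f s + ε + A * ‖(s : EuclideanSpace ℝ (Fin N))‖ ^ 2)
    have b2 : T n (A • fun x : X => ∑ k : Fin N, ((x : EuclideanSpace ℝ (Fin N)) k) ^ 2) s ≤
        A * ‖(s : EuclideanSpace ℝ (Fin N))‖ ^ 2 + A * η := by
      rw [hposhom n A hA0 _ hsqE, Pi.smul_apply, smul_eq_mul, EuclideanSpace.real_norm_sq_eq,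
        ← mul_add]
      have := (abs_le.1 (esq s hs)).2
      gcongr
      linarith
    have b3 : ∑ k : Fin N, T n ((-2 * A * (s : EuclideanSpace ℝ (Fin N)) k) •
          (fun x : X => (x : EuclideanSpace ℝ (Fin N)) k)) s ≤
        -2 * A * ‖(s : EuclideanSpace ℝ (Fin N))‖ ^ 2 + N * (2 * A * R) * η := by
      have hterm : ∀ k ∈ Finset.univ, T n ((-2 * A * (s : EuclideanSpace ℝ (Fin N)) k) •
          (fun x : X => (x : EuclideanSpace ℝ (Fin N)) k)) s ≤
          -2 * A * (s : EuclideanSpace ℝ (Fin N)) k ^ 2 + 2 * A * R * η := by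
        intro k _
        have h := apply_smul_le (hposhom n) (hprE k) (hnprE k) (epr k s hs) (enpr k s hs)
          (-2 * A * (s : EuclideanSpace ℝ (Fin N)) k)
        have hk : |(s : EuclideanSpace ℝ (Fin N)) k| ≤ R :=
          (PiLp.norm_apply_le (s : EuclideanSpace ℝ (Fin N)) k).trans (hR s hs)
        have habs : |-2 * A * (s : EuclideanSpace ℝ (Fin N)) k| ≤ 2 * A * R := by
          rw [abs_mul, abs_mul, abs_of_nonneg hA0, abs_neg, abs_two]
          gcongr
        have := mul_le_mul_of_nonneg_right habs hη.le
        refine h.trans ?_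
        nlinarith
      refine (Finset.sum_le_sum hterm).trans_eq ?_
      rw [Finset.sum_add_distrib, ← Finset.mul_sum, EuclideanSpace.real_norm_sq_eq]
      simp
      ring
    have b4 : |f s + ε + A * ‖(s : EuclideanSpace ℝ (Fin N))‖ ^ 2| ≤ C + ε + A * R ^ 2 := by
      refine (abs_add_le _ _).trans (add_le_add ((abs_add_le _ _).trans ?_) ?_)
      · rw [abs_of_pos hε]
        linarith [hC s]
      · rw [abs_of_nonneg (by positivity)]
        have := hR s hs
        gcongr
    have b5 := mul_le_mul_of_nonneg_right b4 hη.le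
    simp only [Pi.one_apply] at b1
    rw [hB] at hηB
    linarith
  intro f hf hfc ⟨C, hC⟩ K hK
  rw [Metric.tendstoUniformlyOn_iff]
  intro ε hε
  filter_upwards [upper f hf hfc ⟨C, hC⟩ K hK ε hε,
    upper (-f) (hnegE f hf) hfc.neg ⟨C, by simpa using hC⟩ K hK ε hε] with n h1 h2 s hs
  have h3 := hsubadd n f hf (-f) (hnegE f hf) s
  rw [add_neg_cancel, hT0, Pi.add_apply, Pi.zero_apply] at h3
  have h4 := h2 s hs
  rw [Pi.neg_apply] at h4
  rw [Real.dist_eq, abs_lt]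
  constructor <;> linarith [h1 s hs]
end

section
/- Let X be a compact Hausdorff space and let I : C(X) → ℝ be a functional on the space of continuous real-valued functions on X that is comonotone additive and monotone and satisfies I(1) = 1. Then I is lower continuous: for every nondecreasing sequence (f_n)_n in C(X) converging pointwise to a function f ∈ C(X), one has lim_{n→∞} I(f_n) = I(f). -/
open Filter

/-!
By Dini's theorem the sequence converges to `g` in the sup norm, so it suffices that `I` is
norm-continuous. A constant function is comonotone with every function, so `I (f + c) = I f + I c`
for constants `c`; together with `I 1 = 1` this gives `I (1 / (k + 1)) = 1 / (k + 1)` for natural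
`k`. Monotonicity then turns `f ≤ g + 1 / (k + 1)` into `I f ≤ I g + 1 / (k + 1)`.
-/

/-- A comonotone additive functional normalised by `I 1 = 1` is translation equivariant with respect
to the constants `1 / (k + 1)`, which are arbitrarily small. -/
lemma comonotone_additive_add_const
    {X : Type*} [TopologicalSpace X]
    (I : C(X, ℝ) → ℝ)
    (hcomon : ∀ f g : C(X, ℝ),
      (∀ s t : X, (f s - f t) * (g s - g t) ≥ 0) → I (f + g) = I f + I g)
    (hI1 : I (1 : C(X, ℝ)) = 1) (k : ℕ) (f : C(X, ℝ)) :
    I (f + ContinuousMap.const X (1 / ((k : ℝ) + 1))) = I f + 1 / ((k : ℝ) + 1) := by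
  have hc : ∀ (f : C(X, ℝ)) (c : ℝ),
      I (f + ContinuousMap.const X c) = I f + I (ContinuousMap.const X c) :=
    fun f c => hcomon _ _ fun s t => by simp
  have hmul : ∀ (a : ℝ) (m : ℕ),
      I (ContinuousMap.const X ((m + 1 : ℝ) * a)) = (m + 1) * I (ContinuousMap.const X a) := by
    intro a m
    induction m with
    | zero => simp
    | succ m ih =>
      have h : ContinuousMap.const X (((m + 1 : ℕ) + 1 : ℝ) * a)
          = ContinuousMap.const X ((m + 1 : ℝ) * a) + ContinuousMap.const X a := by
        ext x
        simp only [ContinuousMap.const_apply, ContinuousMap.add_apply]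
        push_cast
        ring
      rw [h, hc, ih]
      push_cast
      ring
  have hk : (k : ℝ) + 1 ≠ 0 := by positivity
  have h1 := hmul (1 / ((k : ℝ) + 1)) k
  have h2 : ContinuousMap.const X (((k : ℝ) + 1) * (1 / ((k : ℝ) + 1))) = 1 := by
    ext x
    simp [hk]
  rw [h2, hI1] at h1
  rw [hc, add_right_inj, eq_div_iff hk]
  linarith

/-- A comonotone additive, monotone functional on C(X) with I(1)=1 on a compact
Hausdorff space is lower continuous. -/
theorem comonotone_additive_monotone_functional_lowerContinuous
    {X : Type*} [TopologicalSpace X] [CompactSpace X] [T2Space X]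
    (I : C(X, ℝ) → ℝ)
    (hcomon : ∀ f g : C(X, ℝ),
      (∀ s t : X, (f s - f t) * (g s - g t) ≥ 0) → I (f + g) = I f + I g)
    (hmono : ∀ f g : C(X, ℝ), f ≤ g → I f ≤ I g)
    (hI1 : I (1 : C(X, ℝ)) = 1) :
    ∀ (f : ℕ → C(X, ℝ)) (g : C(X, ℝ)), Monotone f →
      (∀ x : X, Tendsto (fun n => f n x) atTop (nhds (g x))) →
      Tendsto (fun n => I (f n)) atTop (nhds (I g)) := by
  intro f g hf hfg
  have hunif : Tendsto f atTop (nhds g) :=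
    ContinuousMap.tendsto_of_monotone_of_pointwise hf hfg
  have hle : ∀ (k : ℕ) (u v : C(X, ℝ)), dist u v < 1 / ((k : ℝ) + 1) →
      I u ≤ I v + 1 / ((k : ℝ) + 1) := by
    intro k u v huv
    rw [← comonotone_additive_add_const I hcomon hI1]
    refine hmono _ _ fun x => ?_
    have h := (ContinuousMap.dist_apply_le_dist (f := u) (g := v) x).trans_lt huv
    rw [Real.dist_eq, abs_lt] at h
    change u x ≤ v x + 1 / ((k : ℝ) + 1)
    linarith [h.2]
  rw [Metric.tendsto_nhds] at hunif ⊢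
  intro ε hε
  obtain ⟨k, hk⟩ := exists_nat_one_div_lt hε
  filter_upwards [hunif (1 / ((k : ℝ) + 1)) (by positivity)] with n hn
  have h1 := hle k _ _ hn
  have h2 := hle k _ _ (dist_comm (f n) g ▸ hn)
  rw [Real.dist_eq, abs_lt]
  constructor <;> linarith
end

section
/- Let X and Y be Hausdorff topological spaces, let E and F be vector sublattices of the spaces of bounded continuous real-valued functions on X and on Y respectively, each containing the constant function 1, and let T : E → F be a sublinear and monotone operator with T(1) = 1. Let p ∈ (1, ∞) and q ∈ (1, ∞) with 1/p + 1/q = 1. Then for all f, g ∈ E such that fg ∈ E, |f|^p ∈ E and |g|^q ∈ E, one has T(|fg|) ≤ [T(|f|^p)]^{1/p} · [T(|g|^q)]^{1/q} (pointwise on Y). -/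
/-!
Apply Young's inequality to `|f| / α` and `|g| / β`, where `α ^ p = T (|f| ^ p) y + ε` and
`β ^ q = T (|g| ^ q) y + ε`. This bounds `|f g|` by a nonnegative combination of `|f| ^ p` and
`|g| ^ q`, to which monotonicity and sublinearity of `T` apply; evaluating at `y` yields
`T |f g| y ≤ α β (1 / p + 1 / q) = α β`. Adding `ε > 0` keeps `α` and `β` nonzero even where
`T (|f| ^ p)` or `T (|g| ^ q)` vanishes, and letting `ε → 0` gives the claim.
-/

open Filter Topology

/-- Young's inequality with weights: the constant is normalised so that the right-hand side equals
`a ^ (1 / p) * b ^ (1 / q)` when `u ^ p = a` and `v ^ q = b`. -/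
lemma young_weighted {p q a b u v : ℝ} (hpq : p.HolderConjugate q) (ha : 0 < a) (hb : 0 < b)
    (hu : 0 ≤ u) (hv : 0 ≤ v) :
    u * v ≤ a ^ (1 / p) * b ^ (1 / q) / (p * a) * u ^ p +
      a ^ (1 / p) * b ^ (1 / q) / (q * b) * v ^ q := by
  have hp := hpq.pos
  have hq := hpq.symm.pos
  have hα : 0 < a ^ (1 / p) := Real.rpow_pos_of_pos ha _
  have hβ : 0 < b ^ (1 / q) := Real.rpow_pos_of_pos hb _
  have hαp : (a ^ (1 / p)) ^ p = a := by
    rw [← Real.rpow_mul ha.le, one_div_mul_cancel hp.ne', Real.rpow_one]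
  have hβq : (b ^ (1 / q)) ^ q = b := by
    rw [← Real.rpow_mul hb.le, one_div_mul_cancel hq.ne', Real.rpow_one]
  have h := Real.young_inequality_of_nonneg (div_nonneg hu hα.le) (div_nonneg hv hβ.le) hpq
  rw [Real.div_rpow hu hα.le, Real.div_rpow hv hβ.le, hαp, hβq] at h
  calc u * v = a ^ (1 / p) * b ^ (1 / q) * (u / a ^ (1 / p) * (v / b ^ (1 / q))) := by
        field_simp
    _ ≤ a ^ (1 / p) * b ^ (1 / q) * (u ^ p / a / p + v ^ q / b / q) := by gcongr
    _ = _ := by field_simp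


/-- Hölder's inequality for monotone sublinear operators with T(1)=1,
for conjugate exponents p, q ∈ (1,∞). -/
theorem holder_inequality_monotone_sublinear
    {X Y : Type*} [TopologicalSpace X] [T2Space X] [TopologicalSpace Y] [T2Space Y]
    (E : Set (X → ℝ)) (F : Set (Y → ℝ))
    -- E and F consist of bounded continuous functions:
    (hEcb : ∀ f ∈ E, Continuous f ∧ ∃ C : ℝ, ∀ x : X, |f x| ≤ C)
    (hFcb : ∀ f ∈ F, Continuous f ∧ ∃ C : ℝ, ∀ y : Y, |f y| ≤ C)
    -- E and F are vector sublattices: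
    (hEadd : ∀ f ∈ E, ∀ g ∈ E, f + g ∈ E)
    (hEsmul : ∀ c : ℝ, ∀ f ∈ E, c • f ∈ E)
    (hEabs : ∀ f ∈ E, |f| ∈ E)
    (hFadd : ∀ f ∈ F, ∀ g ∈ F, f + g ∈ F)
    (hFsmul : ∀ c : ℝ, ∀ f ∈ F, c • f ∈ F)
    (hFabs : ∀ f ∈ F, |f| ∈ F)
    -- E and F contain the unit:
    (h1E : (1 : X → ℝ) ∈ E) (h1F : (1 : Y → ℝ) ∈ F)
    -- T : E → F is sublinear and monotone with T(1) = 1: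
    (T : (X → ℝ) → (Y → ℝ))
    (hmaps : ∀ f ∈ E, T f ∈ F)
    (hsubadd : ∀ f ∈ E, ∀ g ∈ E, T (f + g) ≤ T f + T g)
    (hposhom : ∀ a : ℝ, 0 ≤ a → ∀ f ∈ E, T (a • f) = a • T f)
    (hmono : ∀ f ∈ E, ∀ g ∈ E, f ≤ g → T f ≤ T g)
    (hT1 : T (1 : X → ℝ) = (1 : Y → ℝ))
    (p q : ℝ) (hp : 1 < p) (hq : 1 < q) (hpq : 1 / p + 1 / q = 1) :
    ∀ f ∈ E, ∀ g ∈ E, f * g ∈ E →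
      (fun x : X => |f x| ^ p) ∈ E → (fun x : X => |g x| ^ q) ∈ E →
      ∀ y : Y, T (fun x : X => |f x * g x|) y ≤
        (T (fun x : X => |f x| ^ p) y) ^ (1 / p) * (T (fun x : X => |g x| ^ q) y) ^ (1 / q) := by
  intro f hf g hg hfg hfp hgq y
  have hpq' : p.HolderConjugate q :=
    Real.holderConjugate_iff.2 ⟨hp, by simpa [one_div] using hpq⟩
  have hp0 : 0 < p := by linarith
  have hq0 : 0 < q := by linarith
  have h0E : (0 : X → ℝ) ∈ E := by simpa using hEsmul 0 1 h1E
  have hT0 : T 0 = 0 := by simpa using hposhom 0 le_rfl 1 h1E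
  have hT_nonneg : ∀ h ∈ E, 0 ≤ h → 0 ≤ T h y := fun h hh h0 => by
    simpa [hT0] using hmono 0 h0E h hh h0 y
  set P : X → ℝ := fun x => |f x| ^ p
  set Q : X → ℝ := fun x => |g x| ^ q
  have hA : 0 ≤ T P y := hT_nonneg P hfp fun x => Real.rpow_nonneg (abs_nonneg _) _
  have hB : 0 ≤ T Q y := hT_nonneg Q hgq fun x => Real.rpow_nonneg (abs_nonneg _) _
  have habs : (fun x : X => |f x * g x|) ∈ E := hEabs _ hfg
  have key : ∀ ε : ℝ, 0 < ε → T (fun x : X => |f x * g x|) y ≤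
      (T P y + ε) ^ (1 / p) * (T Q y + ε) ^ (1 / q) := by
    intro ε hε
    have ha : 0 < T P y + ε := by linarith
    have hb : 0 < T Q y + ε := by linarith
    set a := T P y + ε with ha_def
    set b := T Q y + ε with hb_def
    set M := a ^ (1 / p) * b ^ (1 / q) with hM
    have hM0 : 0 ≤ M := by positivity
    have hc : 0 ≤ M / (p * a) := by positivity
    have hd : 0 ≤ M / (q * b) := by positivity
    have hcP := hEsmul (M / (p * a)) P hfp
    have hdQ := hEsmul (M / (q * b)) Q hgq
    have h1 := hmono _ habs _ (hEadd _ hcP _ hdQ) (fun x =>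
      (abs_mul (f x) (g x)).trans_le
        (young_weighted hpq' ha hb (abs_nonneg (f x)) (abs_nonneg (g x)))) y
    have h2 := hsubadd _ hcP _ hdQ y
    rw [hposhom _ hc _ hfp, hposhom _ hd _ hgq] at h2
    simp only [Pi.add_apply, Pi.smul_apply, smul_eq_mul] at h2
    calc T (fun x : X => |f x * g x|) y
        ≤ M / (p * a) * T P y + M / (q * b) * T Q y := h1.trans h2
      _ ≤ M / (p * a) * a + M / (q * b) * b := by
          gcongr <;> linarith
      _ = M * (1 / p + 1 / q) := by field_simp
      _ = M := by rw [hpq, mul_one]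
  have hlim : Tendsto (fun ε : ℝ => (T P y + ε) ^ (1 / p) * (T Q y + ε) ^ (1 / q)) (𝓝[>] 0)
      (𝓝 (T P y ^ (1 / p) * T Q y ^ (1 / q))) := by
    have hcont : Continuous
        (fun ε : ℝ => (T P y + ε) ^ (1 / p) * (T Q y + ε) ^ (1 / q)) :=
      ((continuous_const.add continuous_id).rpow_const fun _ => Or.inr (by positivity)).mul
        ((continuous_const.add continuous_id).rpow_const fun _ => Or.inr (by positivity))
    simpa using (hcont.tendsto 0).mono_left nhdsWithin_le_nhds
  exact ge_of_tendsto hlim (eventually_mem_nhdsWithin.mono key)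
end

section
/- Let X be a Hausdorff topological space and let T be a monotone and sublinear operator mapping the space C_b(X) of bounded continuous real-valued functions on X into itself. Then for every f ∈ C_b(X) and every x ∈ X, one has (T(-|f|)(x))² ≤ T(1)(x) · T(|f|²)(x); that is, T(1)·T(f²) - |T(-|f|)|² ≥ 0 pointwise. -/
/-!
For `g = |f| ≥ 0`, sublinearity and monotonicity give `0 = T 0 ≤ T g + T (-g)` and `T (-g) ≤ 0`,
so `0 ≤ -T (-g) ≤ T g`, and it suffices to bound `(T g x) ^ 2`. Applying `T` to
`2 t g ≤ t² + g²` for `t ≥ 0` shows that the quadratic `T 1 x * t² - 2 * T g x * t + T (g ^ 2) x` is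
nonnegative for `t ≥ 0`; for `t ≤ 0` each of its terms is nonnegative.
Hence its discriminant is nonpositive, which is the claim.
-/

/-- For a monotone sublinear operator T on C_b(X),
(T(-|f|)(x))² ≤ T(1)(x) · T(|f|²)(x) for all f and x. -/
theorem cbs_variance_nonneg
    {X : Type*} [TopologicalSpace X]
    (T : (BoundedContinuousFunction X ℝ) → (BoundedContinuousFunction X ℝ))
    (hmono : ∀ f g : BoundedContinuousFunction X ℝ, f ≤ g → T f ≤ T g)
    (hsubadd : ∀ f g : BoundedContinuousFunction X ℝ, T (f + g) ≤ T f + T g)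
    (hposhom : ∀ a : ℝ, 0 ≤ a → ∀ f : BoundedContinuousFunction X ℝ, T (a • f) = a • T f) :
    ∀ (f : BoundedContinuousFunction X ℝ) (x : X), (T (-|f|) x) ^ 2 ≤ T 1 x * T (|f| ^ 2) x := by
  intro f x
  have hg : 0 ≤ |f| := abs_nonneg f
  generalize |f| = g at hg ⊢
  have T0 : T 0 = 0 := by simpa using hposhom 0 le_rfl 0
  have hneg : T (-g) x ≤ 0 := by
    have h := hmono (-g) 0 (neg_nonpos.mpr hg) x
    rw [T0] at h
    exact h
  have hsum : 0 ≤ T g x + T (-g) x := by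
    have h := hsubadd g (-g) x
    rw [add_neg_cancel, T0] at h
    exact h
  have nonneg_of (u : BoundedContinuousFunction X ℝ) (hu : 0 ≤ u) : 0 ≤ T u x := by
    have h := hmono 0 u hu x
    rw [T0] at h
    exact h
  have h1 : 0 ≤ T 1 x := nonneg_of 1 fun y => zero_le_one
  have h2 : 0 ≤ T (g ^ 2) x := nonneg_of _ fun y => sq_nonneg (g y)
  have hquad (t : ℝ) : 0 ≤ T 1 x * (t * t) + (-2 * T g x) * t + T (g ^ 2) x := by
    rcases le_total 0 t with ht | ht
    · have hle : (2 * t) • g ≤ (t * t) • (1 : BoundedContinuousFunction X ℝ) + g ^ 2 := by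
        intro y
        change 2 * t * g y ≤ t * t * 1 + g y ^ 2
        nlinarith [sq_nonneg (t - g y)]
      have h := (hmono _ _ hle x).trans (hsubadd _ _ x)
      rw [hposhom _ (by positivity), hposhom _ (by positivity)] at h
      change 2 * t * T g x ≤ t * t * T 1 x + T (g ^ 2) x at h
      linarith
    · have := mul_nonneg h1 (mul_self_nonneg t)
      have := mul_nonneg (nonneg_of g hg) (neg_nonneg.mpr ht)
      linarith
  have hd := discrim_le_zero hquad
  rw [discrim] at hd
  nlinarith
end

section
/- Let T : C([0,1]) → C([0,1]) be a monotone and sublinear operator with T(1) = 1. Fix x ∈ [0,1] and let φ_x denote the function t ↦ |t - x|. Assume there is a constant c ≥ 1 such that T(φ_x)(x) ≤ c·|T(-φ_x)(x)| and assume T(-φ_x)(x) ≠ 0. Then for every nonnegative f ∈ C([0,1]), |T(f)(x) - f(x)| ≤ (c+1)·ω₁(f; sqrt(x² + 2x·T(-id)(x) + T(id²)(x))), where id denotes the function t ↦ t and id² the function t ↦ t². -/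
/-!
Write `ω` for the modulus of continuity of `f` at scale `δ`. Cutting `[x, t]` into
`⌊|t - x| / δ⌋ + 1` equal pieces gives `|f t - f x| ≤ (1 + |t - x| / δ) ω`
(`abs_sub_le_nat_mul_of_step`). Applying `T` to the two resulting pointwise inequalities, and using
`f x ≥ 0` (positive homogeneity controls only nonnegative multiples of `1`), yields
`|T f x - f x| ≤ (1 + T φₓ x / δ) ω`.

It then suffices that `0 < T φₓ x ≤ δ`. The upper bound is a Cauchy-Schwarz argument: with
`m = T φₓ x`, applying `T` to `2 m φₓ ≤ m² + φₓ² = m² + x² + 2 x (-id) + id²` gives `m² ≤ δ²`.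
Positivity follows from `0 = T 0 ≤ T φₓ + T (-φₓ)` and `T (-φₓ) x < 0`. This bounds the error by
`2 ω ≤ (c + 1) ω`.
-/

/-- If `f` varies by at most `w` over distances at most `δ`, then it varies by at most `n * w` over
distances at most `n * δ`. -/
lemma abs_sub_le_nat_mul_of_step (f : Set.Icc (0:ℝ) 1 → ℝ) (δ w : ℝ)
    (h : ∀ t s : Set.Icc (0:ℝ) 1, |(t : ℝ) - (s : ℝ)| ≤ δ → |f t - f s| ≤ w) (n : ℕ) :
    ∀ t s : Set.Icc (0:ℝ) 1, |(t : ℝ) - (s : ℝ)| ≤ n * δ → |f t - f s| ≤ n * w := by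
  induction n with
  | zero =>
    intro t s hts
    have hab : |(t : ℝ) - (s : ℝ)| ≤ 0 := by simpa using hts
    have : t = s := Subtype.ext (sub_eq_zero.1 (abs_nonpos_iff.1 hab))
    simp [this]
  | succ n ih =>
    intro t s hts
    push_cast at hts ⊢
    have hn : (0:ℝ) < (n:ℝ) + 1 := by positivity
    -- The intermediate point at fraction `n / (n + 1)` of the way from `s` to `t`.
    have ha : (0:ℝ) ≤ n / ((n:ℝ) + 1) := by positivity
    have hb : (0:ℝ) ≤ 1 / ((n:ℝ) + 1) := by positivity
    have hab : (n:ℝ) / ((n:ℝ) + 1) + 1 / ((n:ℝ) + 1) = 1 := by field_simp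
    let u : Set.Icc (0:ℝ) 1 := ⟨_, convex_Icc (0:ℝ) 1 t.2 s.2 ha hb hab⟩
    have hu : (u : ℝ) = n / ((n:ℝ) + 1) * t + 1 / ((n:ℝ) + 1) * s := rfl
    have e1 : (t : ℝ) - u = 1 / ((n:ℝ) + 1) * (t - s) := by rw [hu]; field_simp; ring
    have e2 : (u : ℝ) - s = n / ((n:ℝ) + 1) * (t - s) := by rw [hu]; field_simp; ring
    have h1 : |f t - f u| ≤ w := by
      apply h
      rw [e1, abs_mul, abs_of_nonneg hb]
      calc 1 / ((n:ℝ) + 1) * |(t : ℝ) - s| ≤ 1 / ((n:ℝ) + 1) * (((n:ℝ) + 1) * δ) := by gcongr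
        _ = δ := by field_simp
    have h2 : |f u - f s| ≤ n * w := by
      apply ih
      rw [e2, abs_mul, abs_of_nonneg ha]
      calc n / ((n:ℝ) + 1) * |(t : ℝ) - s| ≤ n / ((n:ℝ) + 1) * (((n:ℝ) + 1) * δ) := by gcongr
        _ = n * δ := by field_simp
    calc |f t - f s| ≤ |f t - f u| + |f u - f s| := abs_sub_le _ _ _
      _ ≤ ((n:ℝ) + 1) * w := by linarith

/-- Quantitative Korovkin-type estimate: for a monotone sublinear operator T on C([0,1])
with T(1) = 1, a point x, and a constant c ≥ 1 with T(|t-x|)(x) ≤ c·|T(-|t-x|)(x)| and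
T(-|t-x|)(x) ≠ 0, every nonnegative f ∈ C([0,1]) satisfies
|T(f)(x) - f(x)| ≤ (c+1)·ω₁(f; sqrt(x² + 2x·T(-id)(x) + T(id²)(x))). -/
theorem quantitative_korovkin_estimate
    (T : C(Set.Icc (0:ℝ) 1, ℝ) → C(Set.Icc (0:ℝ) 1, ℝ))
    (hmono : ∀ f g : C(Set.Icc (0:ℝ) 1, ℝ), f ≤ g → T f ≤ T g)
    (hsubadd : ∀ f g : C(Set.Icc (0:ℝ) 1, ℝ), T (f + g) ≤ T f + T g)
    (hposhom : ∀ a : ℝ, 0 ≤ a → ∀ f : C(Set.Icc (0:ℝ) 1, ℝ), T (a • f) = a • T f)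
    (hT1 : T (1 : C(Set.Icc (0:ℝ) 1, ℝ)) = 1)
    (x : Set.Icc (0:ℝ) 1)
    (φx : C(Set.Icc (0:ℝ) 1, ℝ)) (hφx : ∀ t : Set.Icc (0:ℝ) 1, φx t = |(t : ℝ) - (x : ℝ)|)
    (idm : C(Set.Icc (0:ℝ) 1, ℝ)) (hidm : ∀ t : Set.Icc (0:ℝ) 1, idm t = (t : ℝ))
    (idsq : C(Set.Icc (0:ℝ) 1, ℝ)) (hidsq : ∀ t : Set.Icc (0:ℝ) 1, idsq t = (t : ℝ) ^ 2)
    (c : ℝ) (hc : 1 ≤ c)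
    (hcineq : T φx x ≤ c * |T (-φx) x|)
    (hne : T (-φx) x ≠ 0) :
    ∀ f : C(Set.Icc (0:ℝ) 1, ℝ), 0 ≤ f →
      |T f x - f x| ≤ (c + 1) *
        sSup {d : ℝ | ∃ t s : Set.Icc (0:ℝ) 1,
          |(t : ℝ) - (s : ℝ)| ≤ Real.sqrt ((x : ℝ) ^ 2 + 2 * (x : ℝ) * T (-idm) x + T idsq x) ∧
          d = |f t - f s|} := by
  intro f hf
  set δ : ℝ := Real.sqrt ((x : ℝ) ^ 2 + 2 * (x : ℝ) * T (-idm) x + T idsq x) with hδ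
  set w : ℝ := sSup {d : ℝ | ∃ t s : Set.Icc (0:ℝ) 1,
    |(t : ℝ) - (s : ℝ)| ≤ δ ∧ d = |f t - f s|} with hw
  have add (g k : C(Set.Icc (0:ℝ) 1, ℝ)) : T (g + k) x ≤ T g x + T k x := hsubadd g k x
  have hom (a : ℝ) (ha : 0 ≤ a) (g : C(Set.Icc (0:ℝ) 1, ℝ)) : T (a • g) x = a * T g x := by
    rw [hposhom a ha g]; rfl
  have one : T 1 x = 1 := by rw [hT1]; rfl
  have zero : T 0 x = 0 := by simpa using hom 0 le_rfl 0
  have hx0 : 0 ≤ (x : ℝ) := x.2.1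
  have hm : 0 < T φx x := by
    have h1 : T (-φx) x ≤ T 0 x :=
      hmono _ _ (fun t => by simp [hφx t]) x
    have h2 := add φx (-φx)
    rw [add_neg_cancel, zero] at h2
    rw [zero] at h1
    linarith [lt_of_le_of_ne h1 hne]
  have hmδ : T φx x ≤ δ := by
    apply Real.le_sqrt_of_sq_le
    set m := T φx x
    have h1 : T ((2 * m) • φx) x ≤
        T ((m ^ 2 + (x : ℝ) ^ 2) • (1 : C(Set.Icc (0:ℝ) 1, ℝ)) + ((2 * (x : ℝ)) • (-idm) + idsq)) x := by
      refine hmono _ _ (ContinuousMap.le_def.2 fun t => ?_) x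
      simp only [ContinuousMap.add_apply, ContinuousMap.smul_apply, ContinuousMap.neg_apply,
        ContinuousMap.one_apply, smul_eq_mul, hφx, hidm, hidsq]
      nlinarith [sq_nonneg (m - |(t : ℝ) - x|), sq_abs ((t : ℝ) - x)]
    have h2 := add ((m ^ 2 + (x : ℝ) ^ 2) • (1 : C(Set.Icc (0:ℝ) 1, ℝ)))
      ((2 * (x : ℝ)) • (-idm) + idsq)
    have h3 := add ((2 * (x : ℝ)) • (-idm)) idsq
    rw [hom _ (by positivity)] at h1 h2 h3
    rw [one] at h2
    change 2 * m * m ≤ _ at h1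
    linarith
  have hδ0 : 0 < δ := hm.trans_le hmδ
  -- Without boundedness the supremum `w` would be the junk value `0`.
  have hbdd : BddAbove {d : ℝ | ∃ t s : Set.Icc (0:ℝ) 1,
      |(t : ℝ) - (s : ℝ)| ≤ δ ∧ d = |f t - f s|} := by
    refine ⟨2 * ‖f‖, ?_⟩
    rintro d ⟨t, s, -, rfl⟩
    have h1 := f.norm_coe_le_norm t
    have h2 := f.norm_coe_le_norm s
    have h3 := norm_sub_le (f t) (f s)
    rw [Real.norm_eq_abs (f t - f s)] at h3
    linarith
  have hstep : ∀ t s : Set.Icc (0:ℝ) 1, |(t : ℝ) - (s : ℝ)| ≤ δ → |f t - f s| ≤ w :=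
    fun t s h => le_csSup hbdd ⟨t, s, h, rfl⟩
  have hw0 : 0 ≤ w := (abs_nonneg _).trans (hstep x x (by simpa using hδ0.le))
  have key (t : Set.Icc (0:ℝ) 1) : |f t - f x| ≤ w + w / δ * φx t := by
    have h1 : |(t : ℝ) - x| ≤ ((⌊|(t : ℝ) - x| / δ⌋₊ + 1 : ℕ) : ℝ) * δ := by
      rw [← div_le_iff₀ hδ0]; push_cast; exact (Nat.lt_floor_add_one _).le
    have h2 := abs_sub_le_nat_mul_of_step f δ w hstep _ t x h1
    have h3 : (⌊|(t : ℝ) - x| / δ⌋₊ : ℝ) ≤ |(t : ℝ) - x| / δ := Nat.floor_le (by positivity)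
    calc |f t - f x| ≤ _ := h2
      _ ≤ (|(t : ℝ) - x| / δ + 1) * w := by push_cast; gcongr
      _ = w + w / δ * φx t := by rw [hφx]; ring
  have hfx : 0 ≤ f x := hf x
  have hwδ : 0 ≤ w / δ := by positivity
  have hT : w / δ * T φx x ≤ w := by
    calc w / δ * T φx x ≤ w / δ * δ := by gcongr
      _ = w := by field_simp
  have up : T f x ≤ T ((f x + w) • (1 : C(Set.Icc (0:ℝ) 1, ℝ)) + (w / δ) • φx) x := by
    refine hmono _ _ (ContinuousMap.le_def.2 fun t => ?_) x
    have := (abs_le.1 (key t)).2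
    simp only [ContinuousMap.add_apply, ContinuousMap.smul_apply,
        ContinuousMap.one_apply, smul_eq_mul]
    linarith
  have lo : T (f x • (1 : C(Set.Icc (0:ℝ) 1, ℝ))) x ≤
      T (f + (w • (1 : C(Set.Icc (0:ℝ) 1, ℝ)) + (w / δ) • φx)) x := by
    refine hmono _ _ (ContinuousMap.le_def.2 fun t => ?_) x
    have := (abs_le.1 (key t)).1
    simp only [ContinuousMap.add_apply, ContinuousMap.smul_apply,
        ContinuousMap.one_apply, smul_eq_mul]
    linarith
  have up2 := add ((f x + w) • (1 : C(Set.Icc (0:ℝ) 1, ℝ))) ((w / δ) • φx)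
  have lo2 := add f (w • (1 : C(Set.Icc (0:ℝ) 1, ℝ)) + (w / δ) • φx)
  have lo3 := add (w • (1 : C(Set.Icc (0:ℝ) 1, ℝ))) ((w / δ) • φx)
  rw [hom _ (by positivity), hom _ hwδ, one] at up2
  rw [hom _ hw0, hom _ hwδ, one] at lo3
  rw [hom _ hfx, one] at lo
  have hcw : 2 * w ≤ (c + 1) * w := by gcongr; linarith
  rw [abs_le]
  constructor <;> linarith
end

section
/- Let T : C([0,1]) → C([0,1]) be a monotone and sublinear operator with T(1) = 1, and fix x ∈ [0,1]. Let φ_x denote the function t ↦ |t - x|, id the function t ↦ t and id² the function t ↦ t². Then (T(-φ_x)(x))² ≤ x² + 2x·T(-id)(x) + T(id²)(x); in particular x² + 2x·T(-id)(x) + T(id²)(x) ≥ 0. -/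
/-!
Write `L f = T f x`, a monotone sublinear functional with `L 1 = 1`. Put `s = -L (-φ) ≥ 0`;
subadditivity and `L 0 = 0` give `s ≤ L φ`. Applying `L` to the pointwise inequality
`2 s φ ≤ φ² + s²`, where `φ² = id² + 2x (-id) + x²`, yields
`2 s² ≤ 2 s L φ ≤ L (id²) + 2x L (-id) + x² + s²`, which is the claim.
-/


/-- For a monotone sublinear operator T on C([0,1]) with T(1) = 1 and x ∈ [0,1],
(T(-|t-x|)(x))² ≤ x² + 2x·T(-id)(x) + T(id²)(x); in particular the right-hand side
is nonnegative. -/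
theorem korovkin_second_moment_bound
    (T : C(Set.Icc (0:ℝ) 1, ℝ) → C(Set.Icc (0:ℝ) 1, ℝ))
    (hmono : ∀ f g : C(Set.Icc (0:ℝ) 1, ℝ), f ≤ g → T f ≤ T g)
    (hsubadd : ∀ f g : C(Set.Icc (0:ℝ) 1, ℝ), T (f + g) ≤ T f + T g)
    (hposhom : ∀ a : ℝ, 0 ≤ a → ∀ f : C(Set.Icc (0:ℝ) 1, ℝ), T (a • f) = a • T f)
    (hT1 : T (1 : C(Set.Icc (0:ℝ) 1, ℝ)) = 1)
    (x : Set.Icc (0:ℝ) 1)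
    (φx : C(Set.Icc (0:ℝ) 1, ℝ)) (hφx : ∀ t : Set.Icc (0:ℝ) 1, φx t = |(t : ℝ) - (x : ℝ)|)
    (idm : C(Set.Icc (0:ℝ) 1, ℝ)) (hidm : ∀ t : Set.Icc (0:ℝ) 1, idm t = (t : ℝ))
    (idsq : C(Set.Icc (0:ℝ) 1, ℝ)) (hidsq : ∀ t : Set.Icc (0:ℝ) 1, idsq t = (t : ℝ) ^ 2) :
    (T (-φx) x) ^ 2 ≤ (x : ℝ) ^ 2 + 2 * (x : ℝ) * T (-idm) x + T idsq x ∧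
      0 ≤ (x : ℝ) ^ 2 + 2 * (x : ℝ) * T (-idm) x + T idsq x := by
  have h0 : T 0 x = 0 := by
    have h := hposhom 0 le_rfl 0
    rw [zero_smul, zero_smul] at h
    rw [h]; rfl
  have hs : T (-φx) x ≤ 0 := by
    have hle : -φx ≤ 0 := by
      rw [ContinuousMap.le_def]
      intro t
      simp [hφx]
    exact (hmono _ _ hle x).trans h0.le
  have hφ : 0 ≤ T φx x + T (-φx) x := by
    have h := ContinuousMap.le_def.1 (hsubadd φx (-φx)) x
    rw [add_neg_cancel, h0] at h
    exact h
  obtain ⟨s, hsdef⟩ : ∃ s, s = -T (-φx) x := ⟨_, rfl⟩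
  have hs0 : 0 ≤ s := by linarith
  have hx0 : (0 : ℝ) ≤ x := x.2.1
  have hle : (2 * s) • φx ≤
      (idsq + (2 * (x : ℝ)) • (-idm)) + ((x : ℝ) ^ 2 + s ^ 2) • (1 : C(Set.Icc (0:ℝ) 1, ℝ)) := by
    rw [ContinuousMap.le_def]
    intro t
    simp only [ContinuousMap.add_apply, ContinuousMap.smul_apply, ContinuousMap.neg_apply,
      ContinuousMap.one_apply, smul_eq_mul, hφx, hidm, hidsq]
    nlinarith [sq_nonneg (|(t : ℝ) - x| - s), sq_abs ((t : ℝ) - x)]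
  have h1 := ContinuousMap.le_def.1 (hmono _ _ hle) x
  have h2 := ContinuousMap.le_def.1 (hsubadd (idsq + (2 * (x : ℝ)) • (-idm))
    (((x : ℝ) ^ 2 + s ^ 2) • (1 : C(Set.Icc (0:ℝ) 1, ℝ)))) x
  have h3 := ContinuousMap.le_def.1 (hsubadd idsq ((2 * (x : ℝ)) • (-idm))) x
  rw [hposhom _ (by positivity)] at h1
  rw [ContinuousMap.add_apply, hposhom _ (by positivity), hT1] at h2
  rw [ContinuousMap.add_apply, hposhom _ (by positivity)] at h3
  simp only [ContinuousMap.smul_apply, ContinuousMap.one_apply, smul_eq_mul] at h1 h2 h3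
  have h4 : s * s ≤ s * T φx x := mul_le_mul_of_nonneg_left (by linarith) hs0
  have key : (T (-φx) x) ^ 2 ≤ (x : ℝ) ^ 2 + 2 * (x : ℝ) * T (-idm) x + T idsq x := by
    have h5 : (T (-φx) x) ^ 2 = s * s := by rw [hsdef]; ring
    rw [h5]
    nlinarith
  exact ⟨key, (sq_nonneg _).trans key⟩
end
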